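/- Let M be a finite abelian group, f : M → M an additive endomorphism, and M_i := ker(f^i) for i ≥ 0. Then for every i ≥ 0 the map induced by f^i gives an injective group homomorphism M_{i+1}/M_i → M_1 = ker f; consequently the sequence i ↦ Nat.card(M_{i+1}/M_i) is antitone (decreasing) in i, and each cardinality Nat.card(M_{i+1}/M_i) divides Nat.card(M_1). -/

import Mathlib

/-!
Restricted to `M_{i+1} = ker (f^(i+1))`, the map `f^i` takes values in `ker f` and has kernel
`M_i = ker (f^i)`, so it induces an injection `M_{i+1}/M_i → ker f`, and Lagrange's theorem gives
divisibility. The image of this injection is `f^i(M_{i+1})`; since `f^(i+1) x = f^i (f x)` and `f`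
maps `M_{i+2}` into `M_{i+1}`, these images decrease with `i`, hence so do the cardinalities.
-/

theorem endPow_succ_apply {M : Type*} [AddCommGroup M] (f : AddMonoid.End M) (i : ℕ) (x : M) :
    (f ^ (i + 1)) x = (f ^ i) (f x) := by
  rw [pow_succ]
  rfl

theorem endPow_succ_apply' {M : Type*} [AddCommGroup M] (f : AddMonoid.End M) (i : ℕ) (x : M) :
    (f ^ (i + 1)) x = f ((f ^ i) x) := by
  rw [pow_succ']
  rfl

/-- The homomorphism `ker (f^(i+1)) → ker f`, `x ↦ f^i x`. -/
def kerPowHom {M : Type*} [AddCommGroup M] (f : AddMonoid.End M) (i : ℕ) :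
    AddMonoidHom.ker (f ^ (i + 1)) →+ AddMonoidHom.ker f :=
  ((f ^ i : AddMonoid.End M).comp (AddMonoidHom.ker (f ^ (i + 1))).subtype).codRestrict
    (AddMonoidHom.ker f) (fun x => by
      have hx : (f ^ (i + 1)) (x : M) = 0 := x.2
      exact (endPow_succ_apply' f i x).symm.trans hx)

theorem ker_kerPowHom {M : Type*} [AddCommGroup M] (f : AddMonoid.End M) (i : ℕ) :
    (kerPowHom f i).ker =
      (AddMonoidHom.ker (f ^ i)).addSubgroupOf (AddMonoidHom.ker (f ^ (i + 1))) := by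
  ext x
  exact Subtype.ext_iff

theorem range_kerPowHom_succ_le {M : Type*} [AddCommGroup M] (f : AddMonoid.End M) (i : ℕ) :
    (kerPowHom f (i + 1)).range ≤ (kerPowHom f i).range := by
  rintro _ ⟨x, rfl⟩
  have hx : (f ^ (i + 1)) (f (x : M)) = 0 :=
    (endPow_succ_apply f (i + 1) x).symm.trans x.2
  exact ⟨⟨f x, hx⟩, Subtype.ext (endPow_succ_apply f i x).symm⟩

theorem card_quotient_eq_card_range {M : Type*} [AddCommGroup M] (f : AddMonoid.End M) (i : ℕ) :
    Nat.card (AddMonoidHom.ker (f ^ (i + 1)) ⧸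
      (AddMonoidHom.ker (f ^ i)).addSubgroupOf (AddMonoidHom.ker (f ^ (i + 1)))) =
    Nat.card (kerPowHom f i).range := by
  rw [← ker_kerPowHom]
  exact Nat.card_congr (QuotientAddGroup.quotientKerEquivRange (kerPowHom f i)).toEquiv

/-- For `M` a finite abelian group, `f : M → M` an additive endomorphism and
`Mᵢ = ker (fⁱ)`: for every `i`, `fⁱ` induces an injective group homomorphism
`M_{i+1}/Mᵢ → M₁ = ker f`; consequently `i ↦ #(M_{i+1}/Mᵢ)` is antitone and each
`#(M_{i+1}/Mᵢ)` divides `#M₁`. -/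
theorem stmt2 {M : Type*} [AddCommGroup M] [Finite M] (f : AddMonoid.End M) :
    (∀ i : ℕ, ∃ φ : (AddMonoidHom.ker (f ^ (i + 1)) ⧸
          (AddMonoidHom.ker (f ^ i)).addSubgroupOf (AddMonoidHom.ker (f ^ (i + 1)))) →+
        AddMonoidHom.ker f,
      Function.Injective φ ∧
      ∀ (x : AddMonoidHom.ker (f ^ (i + 1))) (h : (f ^ i) (x : M) ∈ AddMonoidHom.ker f),
        φ (QuotientAddGroup.mk x) = ⟨(f ^ i) (x : M), h⟩) ∧
    Antitone (fun i : ℕ => Nat.card (AddMonoidHom.ker (f ^ (i + 1)) ⧸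
      (AddMonoidHom.ker (f ^ i)).addSubgroupOf (AddMonoidHom.ker (f ^ (i + 1))))) ∧
    (∀ i : ℕ, Nat.card (AddMonoidHom.ker (f ^ (i + 1)) ⧸
        (AddMonoidHom.ker (f ^ i)).addSubgroupOf (AddMonoidHom.ker (f ^ (i + 1)))) ∣
      Nat.card (AddMonoidHom.ker f)) := by
  refine ⟨fun i => ?_, antitone_nat_of_succ_le fun i => ?_, fun i => ?_⟩
  · refine ⟨QuotientAddGroup.lift _ (kerPowHom f i) (ker_kerPowHom f i).ge, ?_, fun _ _ => rfl⟩
    refine (injective_iff_map_eq_zero _).2 fun q => ?_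
    induction q using QuotientAddGroup.induction_on with
    | H x =>
      intro hx
      exact (QuotientAddGroup.eq_zero_iff x).2 ((ker_kerPowHom f i).le hx)
  · rw [card_quotient_eq_card_range, card_quotient_eq_card_range]
    exact AddSubgroup.card_le_of_le (range_kerPowHom_succ_le f i)
  · rw [card_quotient_eq_card_range]
    exact AddSubgroup.card_addSubgroup_dvd_card _
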